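/- Let −1 < a < 0. There exists a constant C(a) > 0 such that for every t ≠ 0 and every measurable φ : (0,∞) → ℂ with ∫₀^∞ |φ(y)| u₁(y) dy < ∞, one has sup_{x>0} |S_a(t)φ(x) · k₁(x)| ≤ C(a) (|t|^{−(a+1)/2} + |t|^{−1/2}) ∫₀^∞ |φ(y)| u₁(y) dy. -/

import Mathlib

open MeasureTheory Filter Set

noncomputable def besselJ (ν : ℂ) (z : ℝ) : ℂ :=
  ∑' k : ℕ, ((-1 : ℂ) ^ k / (Complex.Gamma (k + 1) * Complex.Gamma (ν + k + 1))) *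
    ((z : ℂ) / 2) ^ (2 * (k : ℂ) + ν)

noncomputable def Skernel (a x y t : ℝ) : ℂ :=
  if 0 < t then
    Complex.exp (-(Complex.I) * (((a + 1) * Real.pi / 4 : ℝ) : ℂ)) *
      (((2 * |t|) ^ (-(a + 1) / 2) : ℝ) : ℂ) *
      (((x * y / (2 * |t|)) ^ ((1 - a) / 2) : ℝ) : ℂ) *
      besselJ (((a - 1) / 2 : ℝ) : ℂ) (x * y / (2 * |t|)) *
      Complex.exp (Complex.I * ((((x ^ 2 + y ^ 2) / (4 * |t|)) : ℝ) : ℂ))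
  else
    Complex.exp ((Complex.I) * (((a + 1) * Real.pi / 4 : ℝ) : ℂ)) *
      (((2 * |t|) ^ (-(a + 1) / 2) : ℝ) : ℂ) *
      (((x * y / (2 * |t|)) ^ ((1 - a) / 2) : ℝ) : ℂ) *
      besselJ (((a - 1) / 2 : ℝ) : ℂ) (x * y / (2 * |t|)) *
      Complex.exp (-(Complex.I) * ((((x ^ 2 + y ^ 2) / (4 * |t|)) : ℝ) : ℂ))

noncomputable def Sop (a t : ℝ) (φ : ℝ → ℂ) (x : ℝ) : ℂ :=
  ∫ y in Ioi (0:ℝ), Skernel a x y t * φ y * ((y ^ a : ℝ) : ℂ)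

noncomputable def k1 (a x : ℝ) : ℝ := min 1 (x ^ (a / 2))

noncomputable def u1 (a x : ℝ) : ℝ := max (x ^ (a / 2)) (x ^ a)

/-!
Write `J_ν(z) = (z/2)^ν C_ν(-(z/2)²)` with `C_ν` entire. For `z ≤ 1` this gives
`J_ν(z) = O(z^(Re ν))`. For `z ≥ 1`, the function `u = √z J_ν` solves
`u'' + u = ((ν² - 1/4) / z²) u`, whose right-hand side is an integrable perturbation of the
harmonic oscillator: with `K = |ν² - 1/4|`, the energy `|u|² + |u'|²` multiplied by `exp (K / z)`
is nonincreasing, so `J_ν(z) = O(z^(-1/2))`. For `ν = (a - 1)/2` the two regimes bound the kernel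
by `|t|^(-(a+1)/2)` and `|t|^(-1/2) (x y)^(-a/2)`, and the weights `k₁(x)`, `u₁(y)` absorb the
growth in `x` and `y` of both terms.
-/

/-- The Bessel–Clifford function `C_ν(s) = ∑ sᵏ / (k! Γ(ν + k + 1))`, introduced because
`J_ν(z) = (z/2)^ν C_ν(-(z/2)²)`. It is encoded as the regularized hypergeometric function
`₀F₁(; ν + 1; s)`. Since `Complex.Gamma` is `0` at its poles, dividing by it agrees with
multiplying by the entire function `1/Γ`, so that every `ν : ℂ` is allowed. -/
noncomputable def besselClifford (ν s : ℂ) : ℂ := Complex.regularizedHGFun 0 {ν + 1} s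

theorem hasSum_deriv_of_hasFPowerSeriesOnBall {𝕜 F : Type*} [NontriviallyNormedField 𝕜]
    [NormedAddCommGroup F] [NormedSpace 𝕜 F] [CompleteSpace F] {f : 𝕜 → F}
    {p : FormalMultilinearSeries 𝕜 𝕜 F} {x y : 𝕜} {r : ENNReal}
    (h : HasFPowerSeriesOnBall f p x r) (hy : y ∈ Metric.eball (0 : 𝕜) r) :
    HasSum (fun k : ℕ ↦ (k + 1) • y ^ k • p.coeff (k + 1)) (deriv f (x + y)) := by
  have hfderiv := (h.fderiv.hasSum hy).mapL (ContinuousLinearMap.apply 𝕜 F (1 : 𝕜))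
  simpa [FormalMultilinearSeries.apply_eq_pow_smul_coeff, smul_comm _ (_ ^ _)] using hfderiv

theorem hasFPowerSeriesOnBall_besselClifford (ν : ℂ) :
    HasFPowerSeriesOnBall (besselClifford ν) (Complex.regularizedHGFunSeries 0 {ν + 1}) 0 ⊤ := by
  have hradius : (Complex.regularizedHGFunSeries 0 {ν + 1}).radius = ⊤ :=
    Complex.radius_regularizedHGFunSeries_eq_top (by simp)
  have h := (Complex.regularizedHGFunSeries 0 {ν + 1}).hasFPowerSeriesOnBall (by simp [hradius])
  rwa [hradius] at h

theorem hasSum_besselClifford (ν s : ℂ) :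
    HasSum (fun k : ℕ ↦ s ^ k / (k.factorial * Complex.Gamma (ν + k + 1)))
      (besselClifford ν s) := by
  have h := (hasFPowerSeriesOnBall_besselClifford ν).hasSum (y := s) (by simp)
  simpa [Complex.regularizedHGFunCoeff, add_right_comm, div_eq_mul_inv] using h

theorem hasDerivAt_besselClifford (ν s : ℂ) :
    HasDerivAt (besselClifford ν) (besselClifford (ν + 1) s) s := by
  have h := hasFPowerSeriesOnBall_besselClifford ν
  have hdiff : DifferentiableAt ℂ (besselClifford ν) s := by
    simpa using (h.analyticAt_of_mem (by simp)).differentiableAt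
  have hsum : HasSum (fun k : ℕ ↦ s ^ k / (k.factorial * Complex.Gamma (ν + 1 + k + 1)))
      (deriv (besselClifford ν) s) := by
    refine (zero_add s ▸ hasSum_deriv_of_hasFPowerSeriesOnBall h (by simp)).congr_fun fun k ↦ ?_
    have hk : (k + 1 : ℂ) ≠ 0 := k.cast_add_one_ne_zero
    rw [Complex.regularizedHGFunSeries_coeff, Complex.regularizedHGFunCoeff, Nat.factorial_succ]
    simp only [Multiset.map_zero, Multiset.prod_zero, Nat.cast_mul, Nat.cast_add, Nat.cast_one,
      Multiset.map_singleton, show ν + 1 + (k + 1) = ν + 1 + k + 1 by ring,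
      Multiset.prod_singleton, one_div, mul_inv_rev, smul_eq_mul, nsmul_eq_mul]
    field_simp
  exact hdiff.hasDerivAt.congr_deriv (hsum.unique (hasSum_besselClifford (ν + 1) s))

theorem besselClifford_eq_add (ν s : ℂ) :
    besselClifford ν s = (ν + 1) * besselClifford (ν + 1) s + s * besselClifford (ν + 2) s := by
  have h₁ := (hasSum_besselClifford (ν + 1) s).mul_left (ν + 1)
  have h₂ : HasSum (fun k : ℕ ↦ k * (s ^ k / (k.factorial * Complex.Gamma (ν + 1 + k + 1))))
      (s * besselClifford (ν + 2) s) := by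
    rw [← hasSum_nat_add_iff' 1]
    simp only [Finset.range_one, Finset.sum_singleton, Nat.cast_zero, zero_mul, sub_zero]
    refine ((hasSum_besselClifford (ν + 2) s).mul_left s).congr_fun fun k ↦ ?_
    have hk : (k + 1 : ℂ) ≠ 0 := k.cast_add_one_ne_zero
    rw [show ν + 1 + (k + 1 : ℕ) + 1 = ν + 2 + k + 1 by push_cast; ring, Nat.factorial_succ]
    push_cast
    rw [pow_succ']
    field_simp
  refine (hasSum_besselClifford ν s).unique ((h₁.add h₂).congr_fun fun k ↦ ?_)
  rw [div_eq_mul_inv, mul_inv, Complex.one_div_Gamma_eq_self_mul_one_div_Gamma_add_one (ν + k + 1),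
    show ν + k + 1 + 1 = ν + 1 + k + 1 by ring, div_eq_mul_inv, mul_inv]
  ring

theorem besselJ_eq (ν : ℂ) {z : ℝ} (hz : z ≠ 0) :
    besselJ ν z = ((z : ℂ) / 2) ^ ν * besselClifford ν (-((z : ℂ) / 2) ^ 2) := by
  have hz' : (z : ℂ) / 2 ≠ 0 := by simpa using hz
  refine (((hasSum_besselClifford ν _).mul_left _).congr_fun fun k ↦ ?_).tsum_eq
  rw [Complex.Gamma_nat_eq_factorial, Complex.cpow_add _ _ hz', neg_pow (_ ^ 2), ← pow_mul,
    show (2 * k : ℂ) = (2 * k : ℕ) by push_cast; rfl, Complex.cpow_natCast]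
  ring

theorem besselJ_add_two (ν : ℂ) {z : ℝ} (hz : z ≠ 0) :
    besselJ (ν + 2) z = 2 * (ν + 1) / z * besselJ (ν + 1) z - besselJ ν z := by
  have hz' : (z : ℂ) ≠ 0 := by simpa using hz
  have hz2 : (z : ℂ) / 2 ≠ 0 := by simpa using hz
  rw [besselJ_eq _ hz, besselJ_eq _ hz, besselJ_eq _ hz, besselClifford_eq_add ν,
    Complex.cpow_add _ _ hz2, Complex.cpow_add _ _ hz2, Complex.cpow_one, Complex.cpow_ofNat]
  field_simp
  ring

theorem hasDerivAt_besselJ (ν : ℂ) {z : ℝ} (hz : 0 < z) :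
    HasDerivAt (besselJ ν) (ν / z * besselJ ν z - besselJ (ν + 1) z) z := by
  have hz' : (z : ℂ) ≠ 0 := by exact_mod_cast hz.ne'
  have hz2 : (z : ℂ) / 2 ≠ 0 := by simpa using hz.ne'
  have hslit : (z : ℂ) / 2 ∈ Complex.slitPlane := by
    exact_mod_cast Complex.ofReal_mem_slitPlane.2 (half_pos hz)
  have hhalf : HasDerivAt (fun w : ℂ ↦ w / 2) (1 / 2) z := (hasDerivAt_id _).div_const 2
  have hprod := ((hhalf.cpow_const (c := ν) hslit).mul
    ((hasDerivAt_besselClifford ν _).comp _ (hhalf.pow 2).neg)).comp_ofReal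
  refine (hprod.congr_of_eventuallyEq ?_).congr_deriv ?_
  · filter_upwards [Ioi_mem_nhds hz] with x hx using besselJ_eq ν (ne_of_gt hx)
  · rw [besselJ_eq _ hz.ne', besselJ_eq _ hz.ne', Complex.cpow_sub _ _ hz2,
      Complex.cpow_add _ _ hz2, Complex.cpow_one]
    simp only [one_div, Function.comp_apply, Pi.neg_apply, Pi.pow_apply, Nat.cast_ofNat,
      Nat.add_one_sub_one, pow_one, mul_neg]
    field_simp
    ring

theorem continuousOn_besselJ (ν : ℂ) : ContinuousOn (besselJ ν) (Ioi 0) :=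
  fun _ hz ↦ (hasDerivAt_besselJ ν hz).continuousAt.continuousWithinAt

theorem hasDerivAt_sqrt_mul_besselJ (ν : ℂ) {z : ℝ} (hz : 0 < z) :
    HasDerivAt (fun x : ℝ ↦ (√x : ℂ) * besselJ ν x)
      ((ν + 1 / 2) / z * (√z * besselJ ν z) - √z * besselJ (ν + 1) z) z := by
  have hz' : (z : ℂ) ≠ 0 := by exact_mod_cast hz.ne'
  have hsqrt : HasDerivAt (fun x : ℝ ↦ (√x : ℂ)) (√z / (2 * z)) z := by
    refine ((Real.hasDerivAt_sqrt hz.ne').ofReal_comp).congr_deriv ?_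
    rw [one_div, mul_inv, ← Real.sqrt_div_self]
    push_cast
    field_simp
  refine (hsqrt.mul (hasDerivAt_besselJ ν hz)).congr_deriv ?_
  field_simp
  ring

theorem hasDerivAt_deriv_sqrt_mul_besselJ (ν : ℂ) {z : ℝ} (hz : 0 < z) :
    HasDerivAt (fun x : ℝ ↦ (ν + 1 / 2) / x * (√x * besselJ ν x) - √x * besselJ (ν + 1) x)
      ((ν ^ 2 - 1 / 4) / z ^ 2 * (√z * besselJ ν z) - √z * besselJ ν z) z := by
  have hz' : (z : ℂ) ≠ 0 := by exact_mod_cast hz.ne'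
  have hinv : HasDerivAt (fun x : ℝ ↦ (ν + 1 / 2) / (x : ℂ)) (-(ν + 1 / 2) / z ^ 2) z := by
    simpa using ((hasDerivAt_const (z : ℂ) (ν + 1 / 2)).div (hasDerivAt_id _) hz').comp_ofReal
  refine ((hinv.mul (hasDerivAt_sqrt_mul_besselJ ν hz)).sub
    (hasDerivAt_sqrt_mul_besselJ (ν + 1) hz)).congr_deriv ?_
  rw [add_assoc ν 1 1, one_add_one_eq_two, besselJ_add_two ν hz.ne']
  field_simp
  ring

-- With `v = u'`, this is Grönwall's inequality for the perturbed oscillator `u'' + u = w`.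
theorem antitoneOn_energy_mul_exp {E : Type*} [NormedAddCommGroup E] [InnerProductSpace ℝ E]
    {s : Set ℝ} (hs : Convex ℝ s) {u v w : ℝ → E} {g G : ℝ → ℝ}
    (hu : ∀ z ∈ s, HasDerivAt u (v z) z) (hv : ∀ z ∈ s, HasDerivAt v (w z - u z) z)
    (hG : ∀ z ∈ s, HasDerivAt G (g z) z) (hg : ∀ z ∈ s, 0 ≤ g z)
    (hw : ∀ z ∈ s, ‖w z‖ ≤ g z * ‖u z‖) :
    AntitoneOn (fun z ↦ (‖u z‖ ^ 2 + ‖v z‖ ^ 2) * Real.exp (-G z)) s := by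
  have hderiv (z : ℝ) (hz : z ∈ s) : HasDerivAt
      (fun z ↦ (‖u z‖ ^ 2 + ‖v z‖ ^ 2) * Real.exp (-G z))
      ((2 * inner ℝ (v z) (w z) - g z * (‖u z‖ ^ 2 + ‖v z‖ ^ 2)) * Real.exp (-G z)) z := by
    refine (((hu z hz).norm_sq.add (hv z hz).norm_sq).mul (hG z hz).neg.exp).congr_deriv ?_
    simp only [Pi.add_apply, Pi.neg_apply, inner_sub_right, real_inner_comm (u z) (v z)]
    ring
  refine antitoneOn_of_hasDerivWithinAt_nonpos hs
    (fun z hz ↦ (hderiv z hz).continuousAt.continuousWithinAt)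
    (fun z hz ↦ (hderiv z (interior_subset hz)).hasDerivWithinAt) fun z hz ↦ ?_
  replace hz := interior_subset hz
  refine mul_nonpos_of_nonpos_of_nonneg (sub_nonpos.2 ?_) (Real.exp_nonneg _)
  calc 2 * inner ℝ (v z) (w z) ≤ 2 * (‖v z‖ * (g z * ‖u z‖)) := by
        gcongr
        exact (real_inner_le_norm _ _).trans (by gcongr; exact hw z hz)
    _ = g z * (2 * ‖u z‖ * ‖v z‖) := by ring
    _ ≤ g z * (‖u z‖ ^ 2 + ‖v z‖ ^ 2) := by
        gcongr
        exacts [hg z hz, two_mul_le_add_sq _ _]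

theorem exists_sqrt_mul_norm_besselJ_le (ν : ℂ) :
    ∃ D, ∀ z, 1 ≤ z → √z * ‖besselJ ν z‖ ≤ D := by
  set K := ‖ν ^ 2 - 1 / 4‖
  set u : ℝ → ℂ := fun z ↦ √z * besselJ ν z with hu
  set v : ℝ → ℂ := fun z ↦ (ν + 1 / 2) / z * (√z * besselJ ν z) - √z * besselJ (ν + 1) z
  have hpos {z : ℝ} (hz : z ∈ Ici 1) : 0 < z := one_pos.trans_le hz
  have hG (z : ℝ) (hz : z ∈ Ici 1) : HasDerivAt (fun x ↦ -(K * x⁻¹)) (K / z ^ 2) z :=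
    ((hasDerivAt_inv (hpos hz).ne').const_mul K).neg.congr_deriv (by ring)
  have hanti := antitoneOn_energy_mul_exp (convex_Ici 1)
    (fun z hz ↦ hasDerivAt_sqrt_mul_besselJ ν (hpos hz))
    (fun z hz ↦ hasDerivAt_deriv_sqrt_mul_besselJ ν (hpos hz)) hG
    (fun z _ ↦ by positivity) (fun z _ ↦ by simp [K])
  refine ⟨√((‖u 1‖ ^ 2 + ‖v 1‖ ^ 2) * Real.exp K), fun z hz ↦ Real.le_sqrt_of_sq_le ?_⟩
  have hexp : 1 ≤ Real.exp (K * z⁻¹) :=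
    Real.one_le_exp (mul_nonneg (norm_nonneg _) (inv_nonneg.2 (hpos hz).le))
  calc (√z * ‖besselJ ν z‖) ^ 2 = ‖u z‖ ^ 2 := by
        simp [hu, abs_of_nonneg]
    _ ≤ ‖u z‖ ^ 2 + ‖v z‖ ^ 2 := le_add_of_nonneg_right (sq_nonneg _)
    _ ≤ (‖u z‖ ^ 2 + ‖v z‖ ^ 2) * Real.exp (K * z⁻¹) := le_mul_of_one_le_right (by positivity) hexp
    _ ≤ (‖u 1‖ ^ 2 + ‖v 1‖ ^ 2) * Real.exp K := by
        simpa only [neg_neg, inv_one, mul_one] using hanti self_mem_Ici hz hz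

theorem exists_norm_besselJ_le_rpow (ν : ℂ) :
    ∃ B, ∀ z ∈ Ioc (0 : ℝ) 1, ‖besselJ ν z‖ ≤ B * z ^ ν.re := by
  have hcont : Continuous fun z : ℝ ↦ besselClifford ν (-((z : ℂ) / 2) ^ 2) :=
    (continuous_iff_continuousAt.2 fun s ↦ (hasDerivAt_besselClifford ν s).continuousAt).comp
      (by fun_prop)
  obtain ⟨B, hB⟩ := (isCompact_Icc (a := (0 : ℝ)) (b := 1)).exists_bound_of_continuousOn
    hcont.continuousOn
  refine ⟨2⁻¹ ^ ν.re * B, fun z hz ↦ ?_⟩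
  have hnorm : ‖((z : ℂ) / 2) ^ ν‖ = 2⁻¹ ^ ν.re * z ^ ν.re := by
    rw [← Real.mul_rpow (by norm_num) hz.1.le, ← Complex.norm_cpow_eq_rpow_re_of_pos
      (mul_pos (by norm_num) hz.1)]
    push_cast
    ring_nf
  rw [besselJ_eq ν hz.1.ne', norm_mul, hnorm, mul_right_comm]
  gcongr
  · have := hz.1; positivity
  · exact hB z (Ioc_subset_Icc_self hz)

theorem exists_norm_besselJ_le (ν : ℂ) :
    ∃ C > 0, ∀ z > 0, ‖besselJ ν z‖ ≤ C * (z ^ ν.re + z ^ (-1 / 2 : ℝ)) := by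
  obtain ⟨B, hB⟩ := exists_norm_besselJ_le_rpow ν
  obtain ⟨D, hD⟩ := exists_sqrt_mul_norm_besselJ_le ν
  refine ⟨max 1 (max B D), by positivity, fun z hz ↦ ?_⟩
  have hν : 0 < z ^ ν.re := Real.rpow_pos_of_pos hz _
  have hhalf : 0 < z ^ (-1 / 2 : ℝ) := Real.rpow_pos_of_pos hz _
  rcases le_total z 1 with hz1 | hz1
  · calc ‖besselJ ν z‖ ≤ B * z ^ ν.re := hB z ⟨hz, hz1⟩
      _ ≤ max 1 (max B D) * (z ^ ν.re + z ^ (-1 / 2 : ℝ)) := by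
        gcongr
        exacts [le_max_of_le_right (le_max_left _ _), le_add_of_nonneg_right hhalf.le]
  · calc ‖besselJ ν z‖ = √z * ‖besselJ ν z‖ * z ^ (-1 / 2 : ℝ) := by
          rw [mul_right_comm, Real.sqrt_eq_rpow, ← Real.rpow_add hz]
          norm_num
      _ ≤ D * z ^ (-1 / 2 : ℝ) := by gcongr; exact hD z hz1
      _ ≤ max 1 (max B D) * (z ^ ν.re + z ^ (-1 / 2 : ℝ)) := by
        gcongr
        exacts [le_max_of_le_right (le_max_right _ _), le_add_of_nonneg_left hν.le]

theorem exists_rpow_neg_mul_norm_besselJ_le (ν : ℂ) :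
    ∃ C > 0, ∀ z > 0, z ^ (-ν.re) * ‖besselJ ν z‖ ≤ C * (1 + z ^ (-ν.re - 1 / 2)) := by
  obtain ⟨C, hC, hJ⟩ := exists_norm_besselJ_le ν
  refine ⟨C, hC, fun z hz ↦ ?_⟩
  calc z ^ (-ν.re) * ‖besselJ ν z‖
      ≤ z ^ (-ν.re) * (C * (z ^ ν.re + z ^ (-1 / 2 : ℝ))) := by gcongr; exact hJ z hz
    _ = C * (z ^ (-ν.re + ν.re) + z ^ (-ν.re + -1 / 2)) := by
        rw [Real.rpow_add hz, Real.rpow_add hz]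
        ring
    _ = C * (1 + z ^ (-ν.re - 1 / 2)) := by
        rw [neg_add_cancel, Real.rpow_zero, neg_div, ← sub_eq_add_neg]

theorem norm_Skernel (a t : ℝ) {x y : ℝ} (hx : 0 ≤ x) (hy : 0 ≤ y) :
    ‖Skernel a x y t‖ = (2 * |t|) ^ (-(a + 1) / 2) * (x * y / (2 * |t|)) ^ ((1 - a) / 2) *
      ‖besselJ (((a - 1) / 2 : ℝ) : ℂ) (x * y / (2 * |t|))‖ := by
  have hexp (r : ℝ) : ‖Complex.exp (-Complex.I * r)‖ = 1 := by
    simpa using Complex.norm_exp_I_mul_ofReal (-r)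
  have hw : 0 ≤ (2 * |t|) ^ (-(a + 1) / 2) := by positivity
  have hz : 0 ≤ (x * y / (2 * |t|)) ^ ((1 - a) / 2) := by positivity
  unfold Skernel
  split_ifs <;>
    simp only [norm_mul, hexp, Complex.norm_exp_I_mul_ofReal, Complex.norm_of_nonneg hw,
      Complex.norm_of_nonneg hz, one_mul, mul_one]

theorem continuousOn_Skernel (a : ℝ) {x t : ℝ} (hx : 0 < x) (ht : t ≠ 0) :
    ContinuousOn (fun y ↦ Skernel a x y t) (Ioi 0) := by
  have hz : ∀ y ∈ Ioi (0 : ℝ), 0 < x * y / (2 * |t|) := fun y hy ↦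
    div_pos (mul_pos hx hy) (by positivity)
  have hcont : ContinuousOn (fun y ↦ x * y / (2 * |t|)) (Ioi 0) := by fun_prop
  have hJ := (continuousOn_besselJ (((a - 1) / 2 : ℝ) : ℂ)).comp hcont hz
  have hrpow := hcont.rpow_const (p := (1 - a) / 2) fun y hy ↦ Or.inl (hz y hy).ne'
  simp only [Function.comp_def] at hJ
  unfold Skernel
  split_ifs <;> fun_prop

theorem exists_norm_Skernel_le (a : ℝ) :
    ∃ C > 0, ∀ t ≠ 0, ∀ x > 0, ∀ y > 0, ‖Skernel a x y t‖ ≤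
      C * (|t| ^ (-(a + 1) / 2) + |t| ^ (-1 / 2 : ℝ) * (x * y) ^ (-a / 2)) := by
  obtain ⟨C, hC, hJ⟩ := exists_rpow_neg_mul_norm_besselJ_le (((a - 1) / 2 : ℝ) : ℂ)
  set p := -(a + 1) / 2 with hp
  set D : ℝ := 2 ^ p + 2 ^ (-1 / 2 : ℝ)
  refine ⟨C * D, by positivity, fun t ht x hx y hy ↦ ?_⟩
  set w := 2 * |t|
  have hw : 0 < w := by positivity
  have hscale (q : ℝ) : w ^ q = 2 ^ q * |t| ^ q := Real.mul_rpow zero_le_two (abs_nonneg t)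
  set z := x * y / w with hz
  have hz0 : 0 < z := by positivity
  have hbessel : z ^ ((1 - a) / 2) * ‖besselJ (((a - 1) / 2 : ℝ) : ℂ) z‖ ≤
      C * (1 + z ^ (-a / 2)) := by
    convert hJ z hz0 using 4 <;> rw [Complex.ofReal_re] <;> ring
  have hxy : w ^ p * z ^ (-a / 2) = w ^ (-1 / 2 : ℝ) * (x * y) ^ (-a / 2) := by
    rw [hz, Real.div_rpow (by positivity) hw.le, hp,
      show -(a + 1) / 2 = -1 / 2 + -a / 2 by ring, Real.rpow_add hw]
    field_simp
  calc ‖Skernel a x y t‖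
      = w ^ p * (z ^ ((1 - a) / 2) * ‖besselJ (((a - 1) / 2 : ℝ) : ℂ) z‖) := by
        rw [norm_Skernel a t hx.le hy.le, mul_assoc]
    _ ≤ w ^ p * (C * (1 + z ^ (-a / 2))) := by gcongr
    _ = C * (w ^ p + w ^ p * z ^ (-a / 2)) := by ring
    _ = C * (2 ^ p * |t| ^ p +
          2 ^ (-1 / 2 : ℝ) * (|t| ^ (-1 / 2 : ℝ) * (x * y) ^ (-a / 2))) := by
        rw [hxy, hscale, hscale, mul_assoc]
    _ ≤ C * (D * |t| ^ p + D * (|t| ^ (-1 / 2 : ℝ) * (x * y) ^ (-a / 2))) := by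
        gcongr
        exacts [le_add_of_nonneg_right (by positivity), le_add_of_nonneg_left (by positivity)]
    _ = C * D * (|t| ^ p + |t| ^ (-1 / 2 : ℝ) * (x * y) ^ (-a / 2)) := by ring

theorem k1_pos (a : ℝ) {x : ℝ} (hx : 0 < x) : 0 < k1 a x :=
  lt_min one_pos (Real.rpow_pos_of_pos hx _)

theorem rpow_mul_k1_le_u1 (a x : ℝ) {y : ℝ} (hy : 0 ≤ y) : y ^ a * k1 a x ≤ u1 a y :=
  (mul_le_of_le_one_right (Real.rpow_nonneg hy a) (min_le_left _ _)).trans (le_max_right _ _)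

theorem mul_rpow_mul_rpow_mul_k1_le_u1 (a : ℝ) {x y : ℝ} (hx : 0 < x) (hy : 0 < y) :
    (x * y) ^ (-a / 2) * y ^ a * k1 a x ≤ u1 a y :=
  calc (x * y) ^ (-a / 2) * y ^ a * k1 a x ≤ (x * y) ^ (-a / 2) * y ^ a * x ^ (a / 2) := by
        gcongr
        exact min_le_right _ _
    _ = x ^ (-a / 2 + a / 2) * y ^ (-a / 2 + a) := by
        rw [Real.mul_rpow hx.le hy.le, Real.rpow_add hx, Real.rpow_add hy]
        ring
    _ = y ^ (a / 2) := by ring_nf; simp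
    _ ≤ u1 a y := le_max_left _ _

theorem exists_norm_Skernel_mul_k1_le (a : ℝ) :
    ∃ C > 0, ∀ t ≠ 0, ∀ x > 0, ∀ y > 0, ‖Skernel a x y t‖ * y ^ a * k1 a x ≤
      C * (|t| ^ (-(a + 1) / 2) + |t| ^ (-1 / 2 : ℝ)) * u1 a y := by
  obtain ⟨C, hC, hS⟩ := exists_norm_Skernel_le a
  refine ⟨C, hC, fun t ht x hx y hy ↦ ?_⟩
  have hk := (k1_pos a hx).le
  calc ‖Skernel a x y t‖ * y ^ a * k1 a x
      ≤ C * (|t| ^ (-(a + 1) / 2) + |t| ^ (-1 / 2 : ℝ) * (x * y) ^ (-a / 2)) *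
          y ^ a * k1 a x := by
        gcongr
        exact hS t ht x hx y hy
    _ = C * (|t| ^ (-(a + 1) / 2) * (y ^ a * k1 a x) +
          |t| ^ (-1 / 2 : ℝ) * ((x * y) ^ (-a / 2) * y ^ a * k1 a x)) := by ring
    _ ≤ C * (|t| ^ (-(a + 1) / 2) * u1 a y + |t| ^ (-1 / 2 : ℝ) * u1 a y) := by
        gcongr
        exacts [rpow_mul_k1_le_u1 a x hy.le, mul_rpow_mul_rpow_mul_k1_le_u1 a hx hy]
    _ = C * (|t| ^ (-(a + 1) / 2) + |t| ^ (-1 / 2 : ℝ)) * u1 a y := by ring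

-- Integrability is asserted because `Sop` takes the junk value `0` on non-integrable integrands.
theorem weighted_dispersive_estimate_general (a : ℝ) :
    ∃ C > (0 : ℝ), ∀ t : ℝ, t ≠ 0 → ∀ φ : ℝ → ℂ,
      AEStronglyMeasurable φ (volume.restrict (Ioi 0)) →
      IntegrableOn (fun y ↦ ‖φ y‖ * u1 a y) (Ioi 0) →
      ∀ x > (0 : ℝ),
        IntegrableOn (fun y ↦ Skernel a x y t * φ y * ((y ^ a : ℝ) : ℂ)) (Ioi 0) ∧
        ‖Sop a t φ x‖ * k1 a x ≤
          C * (|t| ^ (-(a + 1) / 2) + |t| ^ (-1 / 2 : ℝ)) *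
            ∫ y in Ioi (0 : ℝ), ‖φ y‖ * u1 a y := by
  obtain ⟨C, hC, hS⟩ := exists_norm_Skernel_mul_k1_le a
  refine ⟨C, hC, fun t ht φ hφ hφu x hx ↦ ?_⟩
  set M := C * (|t| ^ (-(a + 1) / 2) + |t| ^ (-1 / 2 : ℝ))
  have hk := k1_pos a hx
  have hmeas : AEStronglyMeasurable (fun y ↦ Skernel a x y t * φ y * ((y ^ a : ℝ) : ℂ))
      (volume.restrict (Ioi 0)) := by
    have hpow : Measurable fun y : ℝ ↦ ((y ^ a : ℝ) : ℂ) := by fun_prop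
    exact (((continuousOn_Skernel a hx ht).aestronglyMeasurable measurableSet_Ioi).mul hφ).mul
      hpow.aestronglyMeasurable
  have hbound : ∀ᵐ y ∂volume.restrict (Ioi 0),
      ‖Skernel a x y t * φ y * ((y ^ a : ℝ) : ℂ)‖ ≤ M / k1 a x * (‖φ y‖ * u1 a y) := by
    filter_upwards [ae_restrict_mem measurableSet_Ioi] with y hy
    rw [norm_mul, norm_mul, Complex.norm_of_nonneg (Real.rpow_nonneg (le_of_lt hy) a),
      div_mul_eq_mul_div, le_div_iff₀ hk]
    linear_combination ‖φ y‖ * hS t ht x hx y hy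
  refine ⟨(hφu.const_mul _).mono' hmeas hbound, ?_⟩
  rw [← le_div_iff₀ hk, mul_div_right_comm, ← integral_const_mul]
  exact norm_integral_le_of_norm_le (hφu.const_mul _) hbound

/-- Weighted dispersive estimate for `-1 < a < 0`:
`sup_{x>0} |S_a(t)φ(x) k₁(x)| ≤ C(a)(|t|^{-(a+1)/2} + |t|^{-1/2}) ∫₀^∞ |φ| u₁`. -/
theorem weighted_dispersive_estimate (a : ℝ) (ha1 : -1 < a) (ha2 : a < 0) :
    ∃ C > (0:ℝ), ∀ t : ℝ, t ≠ 0 → ∀ φ : ℝ → ℂ, Measurable φ →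
      IntegrableOn (fun y => ‖φ y‖ * u1 a y) (Ioi 0) →
      ∀ x > (0:ℝ),
        ‖Sop a t φ x‖ * k1 a x ≤
          C * (|t| ^ (-(a + 1) / 2) + |t| ^ (-(1:ℝ) / 2)) *
            ∫ y in Ioi (0:ℝ), ‖φ y‖ * u1 a y := by
  obtain ⟨C, hC, h⟩ := weighted_dispersive_estimate_general a
  exact ⟨C, hC, fun t ht φ hφ hφu x hx ↦ (h t ht φ hφ.aestronglyMeasurable hφu x hx).2⟩
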